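/- Let r ≥ 1 and n_1, …, n_r > 1 be integers, let R = ℤ_{n_1} ⊕ ⋯ ⊕ ℤ_{n_r}, let S_R be the multiplicative monoid of R, and let U(S_R) = Rˣ be its group of units. Let δ = #{i ∈ [1,r] : 2 ∣ n_i}. Then D(S_R) ≤ D(U(S_R)) + δ. -/

import Mathlib

/-- The Davenport constant of a finite commutative monoid `S`: the least positive
integer `ℓ` such that every multiset of `ℓ` elements of `S` has a proper sub-multiset
(possibly empty) whose product equals the product of the whole multiset. -/
noncomputable def DavenportM (S : Type*) [CommMonoid S] : ℕ :=
  sInf {ℓ : ℕ | 0 < ℓ ∧ ∀ T : Multiset S, Multiset.card T = ℓ →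
    ∃ T' : Multiset S, T' < T ∧ T'.prod = T.prod}

/-- The Davenport constant of a finite abelian group `G`: the least positive integer `ℓ`
such that every multiset of `ℓ` elements of `G` has a nonempty sub-multiset with
product equal to the identity. -/
noncomputable def DavenportG (G : Type*) [CommGroup G] : ℕ :=
  sInf {ℓ : ℕ | 0 < ℓ ∧ ∀ T : Multiset G, Multiset.card T = ℓ →
    ∃ T' : Multiset G, T' ≤ T ∧ T' ≠ 0 ∧ T'.prod = 1}

/-! Let `T` be a multiset of elements of a finite commutative ring `R`. Multiply elements of `T`
together one at a time, always picking one that does not act as a unit on the current product `x`.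
If the stabilizer of `x` in `Rˣ` grows at such a step, record a unit fixing the new product but not
the old one: the recorded units form a multiset without nonempty sub-multiset of product `1`.
When all remaining elements act on `x` as units, at least `D(Rˣ)` units are available among these
and the recorded ones, so some remaining elements have a product fixing `x` and may be deleted.

A step that does not enlarge the stabilizer loses an `𝔽₂`-point of the support of `x R`.
By Fitting's decomposition, the annihilator must grow, since otherwise the factor acts as a unit.
Hence in the quotient by the annihilator of `x`, the annihilator of the new product is a nonzero
ideal `J` such that `1 + J` contains no unit other than `1`. Such an ideal consists of idempotents,
so some homomorphism to `𝔽₂` does not vanish on it. Thus at most `|Hom(R, 𝔽₂)|` steps go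
unrecorded. For `R = ∏ ℤ/nᵢ` these homomorphisms are the coordinates with even `nᵢ`, reduced
modulo `2`. -/

section ProductOneFree

/-- A multiset is product-one free if only its empty sub-multiset has product `1`; in additive
notation this is a zero-sum free sequence. -/
def IsProductOneFree {M : Type*} [CommMonoid M] (T : Multiset M) : Prop :=
  ∀ A ≤ T, A.prod = 1 → A = 0

theorem isProductOneFree_zero {M : Type*} [CommMonoid M] : IsProductOneFree (0 : Multiset M) :=
  fun _ hA _ => Multiset.le_zero.1 hA

variable {G : Type*} [CommGroup G]

theorem IsProductOneFree.cons_of_notMem {L : Multiset G} (hL : IsProductOneFree L)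
    {H : Subgroup G} (hLH : ∀ g ∈ L, g ∈ H) {v : G} (hv : v ∉ H) :
    IsProductOneFree (v ::ₘ L) := by
  intro A hA hA1
  by_cases hvA : v ∈ A
  · obtain ⟨B, rfl⟩ := Multiset.exists_cons_of_mem hvA
    have hBL : B ≤ L := (Multiset.cons_le_cons_iff v).1 hA
    have hB : B.prod ∈ H :=
      multiset_prod_mem B fun g hg => hLH g (Multiset.mem_of_le hBL hg)
    rw [Multiset.prod_cons] at hA1
    exact absurd (eq_inv_of_mul_eq_one_left hA1 ▸ H.inv_mem hB) hv
  · exact hL A ((Multiset.le_cons_of_notMem hvA).1 hA) hA1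

variable [Finite G]

theorem not_isProductOneFree_of_card_mul_card_le {T : Multiset G}
    (hT : Nat.card G * Nat.card G ≤ Multiset.card T) : ¬ IsProductOneFree T := by
  classical
  cases nonempty_fintype G
  intro hfree
  obtain ⟨g, -, hg⟩ : ∃ g ∈ (Finset.univ : Finset G), Nat.card G ≤ T.count g := by
    refine Finset.exists_le_of_sum_le (f := fun _ => Nat.card G) Finset.univ_nonempty ?_
    rwa [Multiset.sum_count_eq_card fun _ _ => Finset.mem_univ _, Finset.sum_const,
      Finset.card_univ, smul_eq_mul, ← Nat.card_eq_fintype_card]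
  have hzero := hfree (Multiset.replicate (Nat.card G) g) (Multiset.le_count_iff_replicate_le.1 hg)
    (by rw [Multiset.prod_replicate, pow_card_eq_one'])
  rw [← Multiset.card_eq_zero, Multiset.card_replicate] at hzero
  exact Nat.card_pos.ne' hzero

theorem davenportG_mem (G : Type*) [CommGroup G] [Finite G] :
    DavenportG G ∈ {ℓ : ℕ | 0 < ℓ ∧ ∀ T : Multiset G, Multiset.card T = ℓ →
      ∃ T' : Multiset G, T' ≤ T ∧ T' ≠ 0 ∧ T'.prod = 1} := by
  refine Nat.sInf_mem ⟨Nat.card G * Nat.card G, Nat.mul_pos Nat.card_pos Nat.card_pos,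
    fun T hT => ?_⟩
  have hT := not_isProductOneFree_of_card_mul_card_le hT.ge
  simp only [IsProductOneFree, not_forall] at hT
  obtain ⟨A, hA, hA1, hA0⟩ := hT
  exact ⟨A, hA, hA0, hA1⟩

theorem davenportG_pos (G : Type*) [CommGroup G] [Finite G] : 0 < DavenportG G :=
  (davenportG_mem G).1

theorem IsProductOneFree.card_lt_davenportG {T : Multiset G} (hT : IsProductOneFree T) :
    Multiset.card T < DavenportG G := by
  by_contra! hcard
  obtain ⟨S, hS⟩ : ∃ S, S ∈ T.powersetCard (DavenportG G) := by
    rw [← Multiset.card_pos_iff_exists_mem, Multiset.card_powersetCard]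
    exact Nat.choose_pos hcard
  obtain ⟨hST, hS⟩ := Multiset.mem_powersetCard.1 hS
  obtain ⟨A, hAS, hA0, hA1⟩ := (davenportG_mem G).2 S hS
  exact hA0 (hT A (hAS.trans hST) hA1)

end ProductOneFree

section Submultiset

theorem exists_le_map_eq_of_le_map {α β : Type*} {f : α → β} {s : Multiset α} {t : Multiset β}
    (h : t ≤ s.map f) : ∃ s' ≤ s, s'.map f = t := by
  have ht : t ∈ (s.map f).powersetCard (Multiset.card t) := Multiset.mem_powersetCard.2 ⟨h, rfl⟩
  rw [Multiset.powersetCard_map, Multiset.mem_map] at ht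
  obtain ⟨s', hs', hmap⟩ := ht
  exact ⟨s', (Multiset.mem_powersetCard.1 hs').1, hmap⟩

theorem exists_le_le_add_eq_of_le_add {α : Type*} {s t u : Multiset α} (h : u ≤ s + t) :
    ∃ s' ≤ s, ∃ t' ≤ t, s' + t' = u := by
  classical
  exact ⟨u ∩ s, Multiset.inter_le_right, u - s, tsub_le_iff_left.2 h, by
    rw [add_comm, Multiset.sub_add_inter]⟩

theorem mul_prod_eq_mul_prod_map {M : Type*} [CommMonoid M] {x : M} {f : M → M} {S : Multiset M}
    (h : ∀ t ∈ S, x * t = x * f t) : x * S.prod = x * (S.map f).prod := by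
  induction S using Multiset.induction with
  | empty => rfl
  | cons a S ih =>
    rw [Multiset.forall_mem_cons] at h
    rw [Multiset.map_cons, Multiset.prod_cons, Multiset.prod_cons, ← mul_assoc, h.1,
      mul_right_comm, ih h.2, mul_right_comm, mul_assoc]

end Submultiset

section Monoid

variable {M : Type*} [CommMonoid M]

theorem mem_stabilizer_units_iff {x : M} {u : Mˣ} :
    u ∈ MulAction.stabilizer Mˣ x ↔ x * u = x := by
  rw [MulAction.mem_stabilizer_iff, Units.smul_def, smul_eq_mul, mul_comm]

theorem stabilizer_units_le_mul (x t : M) :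
    MulAction.stabilizer Mˣ x ≤ MulAction.stabilizer Mˣ (x * t) := fun u hu => by
  rw [mem_stabilizer_units_iff] at hu ⊢
  rw [mul_right_comm, hu]

variable [Finite Mˣ]

theorem exists_le_mul_prod_eq_self_of_associated {x : M} {L : Multiset Mˣ}
    (hL : IsProductOneFree L) (hLx : ∀ g ∈ L, g ∈ MulAction.stabilizer Mˣ x) {Q : Multiset M}
    (hQ : ∀ t ∈ Q, Associated x (x * t))
    (hcard : DavenportG Mˣ ≤ Multiset.card L + Multiset.card Q) :
    ∃ S ≤ Q, S ≠ 0 ∧ x * S.prod = x := by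
  choose! u hu using hQ
  have hnot : ¬ IsProductOneFree (L + Q.map u) := fun hfree => by
    have hlt := hfree.card_lt_davenportG
    rw [Multiset.card_add, Multiset.card_map] at hlt
    exact hlt.not_ge hcard
  simp only [IsProductOneFree, not_forall] at hnot
  obtain ⟨C, hC, hC1, hC0⟩ := hnot
  obtain ⟨A, hA, B, hB, rfl⟩ := exists_le_le_add_eq_of_le_add hC
  obtain ⟨S, hS, rfl⟩ := exists_le_map_eq_of_le_map hB
  have hAx : x * (A.prod : Mˣ) = x :=
    mem_stabilizer_units_iff.1 (multiset_prod_mem A fun g hg => hLx g (Multiset.mem_of_le hA hg))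
  refine ⟨S, hS, ?_, ?_⟩
  · rintro rfl
    rw [Multiset.map_zero, add_zero] at hC0 hC1
    exact hC0 (hL A hA hC1)
  · calc
      x * S.prod = x * ((S.map u).prod : Mˣ) := by
        rw [mul_prod_eq_mul_prod_map fun t ht => (hu t (Multiset.mem_of_le hS ht)).symm,
          ← Units.coeHom_apply, map_multiset_prod, Multiset.map_map]
        rfl
      _ = x * (A.prod : Mˣ) * ((S.map u).prod : Mˣ) := by rw [hAx]
      _ = x := by rw [mul_assoc, ← Units.val_mul, ← Multiset.prod_add, hC1, Units.val_one, mul_one]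

/-- `L` collects the units recorded while multiplying up to `x`, and `c x` bounds the number of
steps still to come that record none. -/
theorem exists_lt_mul_prod_eq {c : M → ℕ} (hc : ∀ x t, c (x * t) ≤ c x)
    (hstep : ∀ x t, Associated x (x * t) ∨
      MulAction.stabilizer Mˣ x < MulAction.stabilizer Mˣ (x * t) ∨ c (x * t) < c x)
    {Q : Multiset M} {x : M} {L : Multiset Mˣ} (hL : IsProductOneFree L)
    (hLx : ∀ g ∈ L, g ∈ MulAction.stabilizer Mˣ x)
    (hcard : DavenportG Mˣ + c x ≤ Multiset.card L + Multiset.card Q) :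
    ∃ Q' < Q, x * Q'.prod = x * Q.prod := by
  induction Q using Multiset.strongInductionOn generalizing x L with | ih Q ih =>
  by_cases hassoc : ∀ t ∈ Q, Associated x (x * t)
  · obtain ⟨S, hS, hS0, hSx⟩ := exists_le_mul_prod_eq_self_of_associated hL hLx hassoc (by omega)
    obtain ⟨Q', rfl⟩ := Multiset.le_iff_exists_add.1 hS
    exact ⟨Q', lt_add_of_pos_left Q' (pos_iff_ne_zero.2 hS0), by
      rw [Multiset.prod_add, ← mul_assoc, hSx]⟩
  · push Not at hassoc
    obtain ⟨t, ht, hxt⟩ := hassoc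
    obtain ⟨Q, rfl⟩ := Multiset.exists_cons_of_mem ht
    rw [Multiset.card_cons] at hcard
    have hLxt : ∀ g ∈ L, g ∈ MulAction.stabilizer Mˣ (x * t) :=
      fun g hg => stabilizer_units_le_mul x t (hLx g hg)
    suffices ∃ Q' < Q, x * t * Q'.prod = x * t * Q.prod by
      obtain ⟨Q', hlt, h⟩ := this
      exact ⟨t ::ₘ Q', Multiset.cons_lt_cons_iff.2 hlt, by
        rw [Multiset.prod_cons, Multiset.prod_cons, ← mul_assoc, h, mul_assoc]⟩
    rcases (hstep x t).resolve_left hxt with hstab | hlt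
    · obtain ⟨v, hvxt, hvx⟩ := SetLike.exists_of_lt hstab
      refine ih Q (Multiset.lt_cons_self Q t) (hL.cons_of_notMem hLx hvx)
        (Multiset.forall_mem_cons.2 ⟨hvxt, hLxt⟩) ?_
      have := hc x t
      rw [Multiset.card_cons]
      omega
    · exact ih Q (Multiset.lt_cons_self Q t) hL hLxt (by omega)

theorem davenportM_le_davenportG_units_add {c : M → ℕ} (hc : ∀ x t, c (x * t) ≤ c x)
    (hstep : ∀ x t, Associated x (x * t) ∨
      MulAction.stabilizer Mˣ x < MulAction.stabilizer Mˣ (x * t) ∨ c (x * t) < c x) :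
    DavenportM M ≤ DavenportG Mˣ + c 1 := by
  refine Nat.sInf_le ⟨Nat.add_pos_left (davenportG_pos Mˣ) _, fun T hT => ?_⟩
  obtain ⟨T', hlt, h⟩ := exists_lt_mul_prod_eq hc hstep (x := 1) (Q := T) isProductOneFree_zero
    (fun g hg => absurd hg (Multiset.notMem_zero g)) (by rw [Multiset.card_zero, zero_add, hT])
  rw [one_mul, one_mul] at h
  exact ⟨T', hlt, h⟩

end Monoid

section Artinian

variable {R : Type*} [CommRing R]

/-- Fitting's decomposition of `a` into a unit on `e R` and a nilpotent on `(1 - e) R`. -/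
theorem exists_isIdempotentElem_isUnit_isNilpotent [IsArtinianRing R] (a : R) :
    ∃ e, IsIdempotentElem e ∧ a ∣ e ∧ IsUnit (a * e + (1 - e)) ∧ IsNilpotent (a * (1 - e)) := by
  obtain ⟨n, y, hy⟩ := IsArtinian.exists_pow_succ_smul_dvd a (1 : R)
  rw [smul_eq_mul, smul_eq_mul, mul_one, Nat.succ_eq_add_one] at hy
  have habsorb : a ^ (n + 1) * (a * y) = a ^ (n + 1) := by
    linear_combination a * hy
  have habsorb_pow (k : ℕ) : a ^ (n + 1) * (a * y) ^ k = a ^ (n + 1) := by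
    induction k with
    | zero => rw [pow_zero, mul_one]
    | succ k ih => rw [pow_succ _ k, ← mul_assoc, ih, habsorb]
  obtain ⟨e, he⟩ : ∃ e, e = (a * y) ^ (n + 1) := ⟨_, rfl⟩
  have hee : e * e = e := by
    rw [he]
    linear_combination y ^ (n + 1) * habsorb_pow (n + 1)
  have hye : a * y * e = e := by
    rw [he]
    linear_combination y ^ (n + 1) * habsorb
  refine ⟨e, hee, ?_, ?_, n + 1, ?_⟩
  · exact he ▸ (dvd_mul_right a y).trans (dvd_pow_self _ n.succ_ne_zero)
  · exact IsUnit.of_mul_eq_one (y * e + (1 - e)) (by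
      linear_combination hye + (a * y - a - y + 1) * hee)
  · have hpow : a ^ (n + 1) * (1 - e) = 0 := by
      rw [mul_sub, mul_one, he, habsorb_pow, sub_self]
    rw [mul_pow, pow_succ (1 - e), mul_left_comm, hpow, mul_zero]

theorem torsionOf_mul_pow_le {x t : R}
    (h : Ideal.torsionOf R R (x * t) ≤ Ideal.torsionOf R R x) (n : ℕ) :
    Ideal.torsionOf R R (x * t ^ n) ≤ Ideal.torsionOf R R x := by
  induction n with
  | zero => rw [pow_zero, mul_one]
  | succ n ih =>
    intro z hz
    have hzt : z * t ^ n ∈ Ideal.torsionOf R R (x * t) := by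
      rw [Ideal.mem_torsionOf_iff, smul_eq_mul] at hz ⊢
      linear_combination hz
    have hz' := h hzt
    refine ih ?_
    rw [Ideal.mem_torsionOf_iff, smul_eq_mul] at hz' ⊢
    linear_combination hz'

theorem associated_mul_of_torsionOf_le [IsArtinianRing R] {x t : R}
    (h : Ideal.torsionOf R R (x * t) ≤ Ideal.torsionOf R R x) : Associated x (x * t) := by
  obtain ⟨e, he, -, hunit, n, hnil⟩ := exists_isIdempotentElem_isUnit_isNilpotent t
  have hmem : (1 - e) ^ n ∈ Ideal.torsionOf R R (x * t ^ n) := by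
    rw [Ideal.mem_torsionOf_iff, smul_eq_mul]
    rw [mul_pow] at hnil
    linear_combination x * hnil
  have hx : x * (1 - e) = 0 := by
    have hx := torsionOf_mul_pow_le h n hmem
    rw [Ideal.mem_torsionOf_iff, smul_eq_mul] at hx
    rw [← he.one_sub.pow_succ_eq n, pow_succ]
    linear_combination (1 - e) * hx
  refine ⟨hunit.unit, ?_⟩
  rw [IsUnit.unit_spec]
  linear_combination (1 - t) * hx

theorem exists_isIdempotentElem_mem_sub_mem [IsArtinianRing R] {I J : Ideal R}
    (h : ∀ u : Rˣ, (u : R) - 1 ∈ J → (u : R) - 1 ∈ I) {j : R} (hj : j ∈ J) :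
    ∃ e, IsIdempotentElem e ∧ e ∈ J ∧ j - e ∈ I := by
  obtain ⟨e, he, hje, hunit, hnil⟩ := exists_isIdempotentElem_isUnit_isNilpotent j
  have heJ : e ∈ J := J.mem_of_dvd hje hj
  refine ⟨e, he, heJ, ?_⟩
  have hunitI := h hunit.unit
  have hnilI := h hnil.isUnit_add_one.unit
  rw [IsUnit.unit_spec] at hunitI hnilI
  have h₁ : j * e - e ∈ I := by
    have := hunitI (by convert J.sub_mem (J.mul_mem_left j heJ) heJ using 1; ring)
    convert this using 1; ring
  have h₂ : j * (1 - e) ∈ I := by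
    rw [add_sub_cancel_right] at hnilI
    exact hnilI (J.mul_mem_right _ hj)
  convert I.add_mem h₁ h₂ using 1
  ring

theorem exists_ringHom_zmod_two_ker_eq {p : Ideal R} [hp : p.IsPrime]
    (h : ∀ a, a * (a - 1) ∈ p) : ∃ φ : R →+* ZMod 2, RingHom.ker φ = p := by
  have hcases (a : R ⧸ p) : a = 0 ∨ a = 1 := by
    obtain ⟨a, rfl⟩ := Ideal.Quotient.mk_surjective a
    have := Ideal.Quotient.eq_zero_iff_mem.2 (h a)
    rwa [map_mul, mul_eq_zero, map_sub, sub_eq_zero, map_one] at this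
  have hcard : Nat.card (R ⧸ p) = 2 :=
    Nat.card_eq_two_iff.2 ⟨0, 1, zero_ne_one, Set.eq_univ_of_forall hcases⟩
  have : Finite (R ⧸ p) := Nat.finite_of_card_ne_zero (hcard ▸ two_ne_zero)
  cases nonempty_fintype (R ⧸ p)
  rw [Nat.card_eq_fintype_card] at hcard
  let ψ : R ⧸ p ≃+* ZMod 2 := (ZMod.ringEquivOfPrime (R ⧸ p) Nat.prime_two hcard).symm
  exact ⟨ψ.toRingHom.comp (Ideal.Quotient.mk p), by
    rw [RingHom.ker_equiv_comp, Ideal.mk_ker]⟩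

theorem exists_ringHom_zmod_two_of_not_le [IsArtinianRing R] {I J : Ideal R}
    (h : ∀ u : Rˣ, (u : R) - 1 ∈ J → (u : R) - 1 ∈ I) (hJI : ¬ J ≤ I) :
    ∃ φ : R →+* ZMod 2, I ≤ RingHom.ker φ ∧ ¬ J ≤ RingHom.ker φ := by
  obtain ⟨j, hjJ, hjI⟩ := SetLike.not_le_iff_exists.1 hJI
  obtain ⟨e, he, heJ, hje⟩ := exists_isIdempotentElem_mem_sub_mem h hjJ
  have heI : e ∉ I := fun heI => hjI ((I.sub_mem_iff_left heI).1 hje)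
  obtain ⟨p, hp, hIp, hep⟩ := I.exists_le_prime_notMem_of_isIdempotentElem e he heI
  have hbool (a : R) : a * (a - 1) ∈ p := by
    obtain ⟨f, hf, -, haf⟩ := exists_isIdempotentElem_mem_sub_mem h (J.mul_mem_left a heJ)
    refine (hp.mem_or_mem (y := e) ?_).resolve_right hep
    have hidem : (a * e - f) * (a * e + f - 1) ∈ p := p.mul_mem_right _ (hIp haf)
    convert hidem using 1
    linear_combination hf.eq - a ^ 2 * he.eq
  obtain ⟨φ, hφ⟩ := exists_ringHom_zmod_two_ker_eq hbool
  exact ⟨φ, hφ ▸ hIp, fun hJ => hep (hφ ▸ hJ heJ)⟩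

end Artinian

section ResidueTwoSupport

variable {R : Type*} [CommRing R]

/-- The `𝔽₂`-points of the support of the module `x R`, each given as a homomorphism to `𝔽₂` that
kills the annihilator of `x`. Its cardinality bounds the number of steps that still shrink `x R`
without enlarging the unit stabilizer. -/
def residueTwoSupport (x : R) : Set (R →+* ZMod 2) :=
  {φ | Ideal.torsionOf R R x ≤ RingHom.ker φ}

theorem torsionOf_le_torsionOf_mul (x t : R) :
    Ideal.torsionOf R R x ≤ Ideal.torsionOf R R (x * t) := fun a ha => by
  rw [Ideal.mem_torsionOf_iff, smul_eq_mul] at ha ⊢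
  rw [← mul_assoc, ha, zero_mul]

theorem residueTwoSupport_mul_subset (x t : R) :
    residueTwoSupport (x * t) ⊆ residueTwoSupport x :=
  fun _ hφ => (torsionOf_le_torsionOf_mul x t).trans hφ

theorem units_sub_one_mem_torsionOf_iff {x : R} {u : Rˣ} :
    (u : R) - 1 ∈ Ideal.torsionOf R R x ↔ u ∈ MulAction.stabilizer Rˣ x := by
  rw [mem_stabilizer_units_iff, Ideal.mem_torsionOf_iff, smul_eq_mul, mul_comm, mul_sub, mul_one,
    sub_eq_zero]

theorem associated_or_stabilizer_lt_or_residueTwoSupport_ssubset [IsArtinianRing R] (x t : R) :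
    Associated x (x * t) ∨ MulAction.stabilizer Rˣ x < MulAction.stabilizer Rˣ (x * t) ∨
      residueTwoSupport (x * t) ⊂ residueTwoSupport x := by
  by_cases htors : Ideal.torsionOf R R (x * t) ≤ Ideal.torsionOf R R x
  · exact Or.inl (associated_mul_of_torsionOf_le htors)
  by_cases hstab : MulAction.stabilizer Rˣ (x * t) ≤ MulAction.stabilizer Rˣ x
  · obtain ⟨φ, hφx, hφxt⟩ := exists_ringHom_zmod_two_of_not_le (fun u hu =>
      units_sub_one_mem_torsionOf_iff.2 (hstab (units_sub_one_mem_torsionOf_iff.1 hu))) htors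
    exact Or.inr (Or.inr ⟨residueTwoSupport_mul_subset x t, fun hsub => hφxt (hsub hφx)⟩)
  · exact Or.inr (Or.inl (lt_of_le_not_ge (stabilizer_units_le_mul x t) hstab))

theorem davenport_le_units_add_delta_general (R : Type*) [CommRing R] [Finite R] :
    DavenportM R ≤ DavenportG Rˣ + Nat.card (R →+* ZMod 2) := by
  have : Finite (R →+* ZMod 2) := DFunLike.finite _
  refine (davenportM_le_davenportG_units_add (c := fun x : R => (residueTwoSupport x).ncard)
    (fun x t => Set.ncard_le_ncard (residueTwoSupport_mul_subset x t)) fun x t => ?_).trans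
    (Nat.add_le_add_left (Set.ncard_le_card _) _)
  exact (associated_or_stabilizer_lt_or_residueTwoSupport_ssubset x t).imp_right
    (Or.imp_right fun hlt => Set.ncard_lt_ncard hlt)

end ResidueTwoSupport

theorem exists_eq_comp_evalRingHom {ι : Type*} [Finite ι] {R : ι → Type*} [∀ i, CommRing (R i)]
    {S : Type*} [CommRing S] [IsDomain S] (φ : (∀ i, R i) →+* S) :
    ∃ (i : ι) (ψ : R i →+* S), φ = ψ.comp (Pi.evalRingHom R i) := by
  obtain ⟨i, q, hq⟩ := PrimeSpectrum.exists_comap_evalRingHom_eq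
    ⟨RingHom.ker φ, RingHom.ker_isPrime φ⟩
  have hker : RingHom.ker (Pi.evalRingHom R i) ≤ RingHom.ker φ :=
    (Ideal.ker_le_comap _).trans_eq (congrArg PrimeSpectrum.asIdeal hq)
  exact ⟨i, _, (RingHom.liftOfSurjective_comp (Pi.evalRingHom R i) (Function.surjective_eval i)
    ⟨φ, hker⟩).symm⟩

theorem card_ringHom_pi_zmod_le {ι : Type*} [Fintype ι] (n : ι → ℕ) (m : ℕ) [Fact m.Prime] :
    Nat.card ((∀ i, ZMod (n i)) →+* ZMod m) ≤ (Finset.univ.filter fun i => m ∣ n i).card := by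
  rw [← Fintype.card_subtype, ← Nat.card_eq_fintype_card]
  refine Nat.card_le_card_of_surjective (fun i : {i // m ∣ n i} =>
    (ZMod.castHom i.2 (ZMod m)).comp (Pi.evalRingHom _ i.1)) fun φ => ?_
  obtain ⟨i, ψ, rfl⟩ := exists_eq_comp_evalRingHom φ
  have hdvd : m ∣ n i := by
    rw [← ZMod.natCast_eq_zero_iff, ← map_natCast ψ, ZMod.natCast_self, map_zero]
  exact ⟨⟨i, hdvd⟩, by rw [Subsingleton.elim ψ (ZMod.castHom hdvd (ZMod m))]⟩

theorem davenport_le_units_add_delta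
    (r : ℕ) (hr : 1 ≤ r) (n : Fin r → ℕ) (hn : ∀ i, 1 < n i) :
    DavenportM ((i : Fin r) → ZMod (n i))
      ≤ DavenportG ((i : Fin r) → ZMod (n i))ˣ
        + (Finset.univ.filter fun i : Fin r => 2 ∣ n i).card := by
  have (i : Fin r) : NeZero (n i) := ⟨(zero_lt_one.trans (hn i)).ne'⟩
  exact (davenport_le_units_add_delta_general _).trans
    (Nat.add_le_add_left (card_ringHom_pi_zmod_le n 2) _)
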